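/- arXiv:1509.08318 — 2 statements merged into one kernel-verified Lean document; each statement's English description precedes it below -/
import Mathlib

section
/- Let A be a unital C*-algebra, F ⊂ C₀((0,1),A) and F' ⊂ C([0,1],ℂ) finite subsets, and η > 0. Then there exist a finite subset G ⊂ C₀((0,1),A) consisting of elements vanishing outside (1/3, 2/3) and δ > 0 such that: for every unital C*-algebra E, every unital *-homomorphism θ : C([0,1],ℂ) → E, all *-homomorphisms ν₀, ν₁ : C₀((0,1),A) → E compatible with θ, and every unitary v ∈ E with ‖v ν₀(x) v* − ν₁(x)‖ ≤ δ for all x ∈ G, there exists a completely positive map ρ : C₀((0,1),A) → M₂(E) such that: (i) for every x with x(t) = 0 for all t ∉ (0, 1/3), ρ(x) is the matrix with ν₀(x) in the (1,1) entry and 0 elsewhere; (ii) for every x with x(t) = 0 for all t ∉ (2/3, 1), ρ(x) is the matrix with ν₁(x) in the (1,1) entry and 0 elsewhere; (iii) for every tracial state τ on E with τ∘ν₀ = τ∘ν₁, one has (τ ⊗ Tr₂)(ρ(x)) = τ(ν₀(x)) for all x; (iv) ‖ρ(xy) − ρ(x)ρ(y)‖ ≤ η for all x, y ∈ F; and (v)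 ‖ρ(h·x) − θ^{⊕2}(h)ρ(x)‖ ≤ η for all x ∈ F and h ∈ F'. -/
open scoped ComplexOrder unitInterval ENNReal

set_option synthInstance.maxHeartbeats 1000000
set_option maxHeartbeats 1000000

noncomputable section

/-- The suspension `C₀((0,1),A)`, realised as the non-unital star subalgebra of `C([0,1],A)`
consisting of the functions vanishing at both endpoints. -/
def susp (A : Type) [CStarAlgebra A] : NonUnitalStarSubalgebra ℂ C(I, A) where
  carrier := {x | x 0 = 0 ∧ x 1 = 0}
  add_mem' hx hy := by
    constructor <;> simp [ContinuousMap.add_apply, hx.1, hx.2, hy.1, hy.2]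
  mul_mem' hx hy := by
    constructor <;> simp [ContinuousMap.mul_apply, hx.1, hx.2, hy.1, hy.2]
  smul_mem' c x hx := by
    constructor <;> simp [ContinuousMap.smul_apply, hx.1, hx.2]
  zero_mem' := by constructor <;> simp
  star_mem' hx := by
    constructor <;> simp [ContinuousMap.star_apply, hx.1, hx.2]

/-- The pointwise product `h·x` of a scalar-valued continuous function on `[0,1]` with an element
of the suspension, which again lies in the suspension. -/
def hsmul {A : Type} [CStarAlgebra A] (h : C(I, ℂ)) (x : susp A) : susp A :=
  ⟨h • (x : C(I, A)), by
    have h0 : (x : C(I, A)) 0 = 0 ∧ (x : C(I, A)) 1 = 0 := x.2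
    constructor <;> simp [ContinuousMap.smul_apply', h0.1, h0.2]⟩

/-- A real-valued continuous function on `[0,1]`, regarded as a complex-valued one. -/
def ofRealCM (f : C(I, ℝ)) : C(I, ℂ) :=
  ⟨fun t => (f t : ℂ), Complex.continuous_ofReal.comp f.continuous⟩

/-- A *-homomorphism `ν : C₀((0,1),A) → E` is compatible with a unital *-homomorphism
`θ : C([0,1]) → E` if `ν(h·x) = θ(h)ν(x) = ν(x)θ(h)` for all `h` and `x`. -/
def Compatible {A E : Type} [CStarAlgebra A] [CStarAlgebra E]
    (θ : C(I, ℂ) →⋆ₐ[ℂ] E) (ν : susp A →⋆ₙₐ[ℂ] E) : Prop :=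
  ∀ (h : C(I, ℂ)) (x : susp A), ν (hsmul h x) = θ h * ν x ∧ ν (hsmul h x) = ν x * θ h

/-- Tracial states on a unital C*-algebra. -/
def IsTracialState {B : Type} [CStarAlgebra B] (τ : B →L[ℂ] ℂ) : Prop :=
  τ 1 = 1 ∧ (∀ b : B, (∃ y, b = star y * y) → 0 ≤ τ b) ∧ ∀ a b : B, τ (a * b) = τ (b * a)

/-- The C*-norm on a complex star algebra (such as a matrix algebra over a C*-algebra),
defined via the spectral radius; this recovers the unique C*-norm when one exists. -/
def cstarNorm {B : Type} [Ring B] [StarRing B] [Algebra ℂ B] (a : B) : ℝ :=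
  Real.sqrt (spectralRadius ℂ (star a * a)).toReal

/-- Complete positivity of a linear map between complex star algebras: positive matrices
(i.e. those of the form `y* y`) are sent to positive matrices, at every matrix level. -/
def IsCompletelyPositive {B C : Type} [NonUnitalRing B] [StarRing B] [Module ℂ B]
    [NonUnitalRing C] [StarRing C] [Module ℂ C] (φ : B →ₗ[ℂ] C) : Prop :=
  ∀ (n : ℕ) (M : Matrix (Fin n) (Fin n) B),
    (∃ y : Matrix (Fin n) (Fin n) B, M = star y * y) →
    ∃ z : Matrix (Fin n) (Fin n) C, M.map (fun b => φ b) = star z * z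

section General

lemma cstarMatrix_norm_le_sum {E : Type} [CStarAlgebra E] [PartialOrder E] [StarOrderedRing E]
    (M : CStarMatrix (Fin 2) (Fin 2) E) : ‖M‖ ≤ ∑ j, ∑ i, ‖M i j‖ := by
  rw [CStarMatrix.norm_def]
  refine (CStarMatrix.toCLM M).opNorm_le_bound (by positivity) fun v => ?_
  simp only [CStarMatrix.toCLM_apply_eq_sum, Finset.sum_mul]
  apply WithCStarModule.pi_norm_le_sum_norm _ |>.trans
  gcongr with i _
  change ‖∑ j, v j * M j i‖ ≤ _
  apply norm_sum_le _ _ |>.trans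
  gcongr with j _
  apply norm_mul_le _ _ |>.trans
  rw [mul_comm]
  gcongr
  exact WithCStarModule.norm_apply_le_norm v j

lemma cstarNorm_le_sum {E : Type} [CStarAlgebra E] (M : Matrix (Fin 2) (Fin 2) E) :
    cstarNorm M ≤ ‖M 0 0‖ + ‖M 0 1‖ + ‖M 1 0‖ + ‖M 1 1‖ := by
  let := CStarAlgebra.spectralOrder E
  have := CStarAlgebra.spectralOrderedRing E
  set N : CStarMatrix (Fin 2) (Fin 2) E := CStarMatrix.ofMatrix M with hN
  have h1 : spectralRadius ℂ (star M * M) = spectralRadius ℂ (star N * N) := rfl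
  have h2 : spectralRadius ℂ (star N * N) = ‖star N * N‖₊ :=
    (IsSelfAdjoint.star_mul_self N).spectralRadius_eq_nnnorm
  have h3 : cstarNorm M = ‖N‖ := by
    unfold cstarNorm
    rw [h1, h2, ENNReal.coe_toReal, coe_nnnorm, CStarRing.norm_star_mul_self,
      Real.sqrt_mul_self (norm_nonneg _)]
  rw [h3]
  refine (cstarMatrix_norm_le_sum N).trans (le_of_eq ?_)
  simp only [Fin.sum_univ_two, hN, CStarMatrix.ofMatrix_apply]
  ring

lemma exists_sum_sq_aux {B : Type} [CStarAlgebra B] (y z : B) :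
    ∃ w : B, star y * y + star z * z = star w * w := by
  let := CStarAlgebra.spectralOrder B
  have := CStarAlgebra.spectralOrderedRing B
  exact CStarAlgebra.nonneg_iff_eq_star_mul_self.mp
    (add_nonneg (star_mul_self_nonneg y) (star_mul_self_nonneg z))

lemma exists_sum_sq {E : Type} [CStarAlgebra E] {n : ℕ}
    (y z : Matrix (Fin n) (Fin n) (Matrix (Fin 2) (Fin 2) E)) :
    ∃ w : Matrix (Fin n) (Fin n) (Matrix (Fin 2) (Fin 2) E),
      star y * y + star z * z = star w * w := by
  let := CStarAlgebra.spectralOrder E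
  have := CStarAlgebra.spectralOrderedRing E
  exact exists_sum_sq_aux (B := CStarMatrix (Fin n) (Fin n) (CStarMatrix (Fin 2) (Fin 2) E)) y z

/-- corner embedding composed with `ν`, compressed by `W`. -/
lemma cp_piece {B E : Type} [NonUnitalRing B] [StarRing B] [CStarAlgebra E]
    (ν : B → E) (hν : ∀ (n : ℕ) (u w : Fin n → B),
      ν (∑ j, star (u j) * w j) = ∑ j, star (ν (u j)) * ν (w j))
    (W : Matrix (Fin 2) (Fin 2) E) {n : ℕ} (y : Matrix (Fin n) (Fin n) B) :
    (star y * y).map (fun b => star W * !![ν b, 0; 0, 0] * W) =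
      star (y.map (fun b => !![ν b, 0; 0, 0] * W)) * (y.map (fun b => !![ν b, 0; 0, 0] * W)) := by
  ext1 k l
  simp only [Matrix.map_apply, Matrix.mul_apply, Matrix.star_apply]
  have h : (!![ν (∑ j, star (y j k) * y j l), 0; 0, 0] : Matrix (Fin 2) (Fin 2) E) =
      ∑ j, star !![ν (y j k), 0; 0, 0] * !![ν (y j l), 0; 0, 0] := by
    rw [hν n (fun j => y j k) (fun j => y j l)]
    ext i j
    fin_cases i <;> fin_cases j <;>
      simp [Matrix.sum_apply, Matrix.mul_apply, Matrix.star_apply]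
  rw [h, Finset.mul_sum, Matrix.sum_mul]
  refine Finset.sum_congr rfl fun j _ => ?_
  rw [star_mul]
  simp only [mul_assoc]

end General

section Susp
variable {A : Type} [CStarAlgebra A]

lemma susp_closed : IsClosed ((susp A : NonUnitalStarSubalgebra ℂ C(I, A)) : Set C(I, A)) := by
  have : ((susp A : NonUnitalStarSubalgebra ℂ C(I, A)) : Set C(I, A)) =
    {x | x 0 = 0} ∩ {x | x 1 = 0} := rfl
  rw [this]
  exact (isClosed_eq (continuous_eval_const 0) continuous_const).inter
    (isClosed_eq (continuous_eval_const 1) continuous_const)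

lemma nu_norm_le {E : Type} [CStarAlgebra E] (ν : susp A →⋆ₙₐ[ℂ] E) (x : susp A) :
    ‖ν x‖ ≤ ‖x‖ := by
  have := susp_closed (A := A)
  exact NonUnitalStarAlgHom.norm_apply_le ν x

lemma hsmul_apply (h : C(I, ℂ)) (x : susp A) (t : I) :
    (hsmul h x : C(I, A)) t = h t • (x : C(I, A)) t := rfl

lemma hsmul_ext {x y : susp A} (h : ∀ t, (x : C(I, A)) t = (y : C(I, A)) t) : x = y :=
  Subtype.ext (ContinuousMap.ext h)

lemma hsmul_hsmul (h k : C(I, ℂ)) (x : susp A) : hsmul h (hsmul k x) = hsmul (h * k) x :=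
  hsmul_ext fun t => by simp [hsmul_apply, mul_smul]

lemma hsmul_add_left (h k : C(I, ℂ)) (x : susp A) : hsmul (h + k) x = hsmul h x + hsmul k x :=
  hsmul_ext fun t => by simp [hsmul_apply, add_smul]

lemma hsmul_one (x : susp A) : hsmul 1 x = x :=
  hsmul_ext fun t => by simp [hsmul_apply]

lemma hsmul_zero (x : susp A) : hsmul 0 x = 0 :=
  hsmul_ext fun t => by simp [hsmul_apply]

lemma hsmul_mul_hsmul (h k : C(I, ℂ)) (x y : susp A) :
    hsmul h x * hsmul k y = hsmul (h * k) (x * y) :=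
  hsmul_ext fun t => by
    simp [hsmul_apply, mul_smul, smul_comm (k t) (h t)]

end Susp

section Functions

/-- The clamp `max 0 (min 1 (9t - 3 - i))` times `π/2`. -/
def ang (i : ℝ) (t : I) : ℝ := Real.pi / 2 * max 0 (min 1 (9 * (t : ℝ) - 3 - i))

lemma ang_cont (i : ℝ) : Continuous (ang i) := by unfold ang; fun_prop

lemma ang_zero {i : ℝ} {t : I} (h : 9 * (t : ℝ) ≤ 3 + i) : ang i t = 0 := by
  unfold ang
  rw [max_eq_left ((min_le_right _ _).trans (by linarith)), mul_zero]

lemma ang_one {i : ℝ} {t : I} (h : 4 + i ≤ 9 * (t : ℝ)) : ang i t = Real.pi / 2 := by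
  unfold ang
  rw [min_eq_left (by linarith), max_eq_right zero_le_one, mul_one]

lemma cos_sin_zero {i j : ℝ} (h : i + 1 ≤ j) (t : I) :
    Real.cos (ang i t) * Real.sin (ang j t) = 0 := by
  rcases le_total (9 * (t : ℝ)) (4 + i) with h1 | h1
  · rw [ang_zero (i := j) (by linarith)]; simp
  · rw [ang_one h1]; simp

lemma exists_functions : ∃ a b c d : C(I, ℂ), star a = a ∧ star b = b ∧ star c = c ∧ star d = d ∧
    a * c = 0 ∧ a * d = 0 ∧ b * c = 0 ∧ a * a + b * b + c * c + d * d = 1 ∧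
    (∀ t : I, (t : ℝ) ≤ 1 / 3 → b t = 0 ∧ c t = 0 ∧ d t = 0) ∧
    (∀ t : I, 2 / 3 ≤ (t : ℝ) → a t = 0 ∧ b t = 0 ∧ d t = 0) := by
  refine ⟨ofRealCM ⟨fun t => Real.cos (ang 0 t), by have := ang_cont 0; fun_prop⟩,
    ofRealCM ⟨fun t => Real.sin (ang 0 t) * Real.cos (ang 1 t),
      by have := ang_cont 0; have := ang_cont 1; fun_prop⟩,
    ofRealCM ⟨fun t => Real.sin (ang 2 t), by have := ang_cont 2; fun_prop⟩,
    ofRealCM ⟨fun t => Real.sin (ang 1 t) * Real.cos (ang 2 t),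
      by have := ang_cont 2; have := ang_cont 1; fun_prop⟩, ?_, ?_, ?_, ?_, ?_, ?_, ?_, ?_, ?_, ?_⟩
  iterate 4
    ext t
    simp only [ofRealCM, ContinuousMap.star_apply, ContinuousMap.coe_mk, RCLike.star_def,
      Complex.conj_ofReal]
  · ext t
    have := cos_sin_zero (i := 0) (j := 2) (by norm_num) t
    simp only [ofRealCM, ContinuousMap.mul_apply, ContinuousMap.coe_mk, ContinuousMap.zero_apply]
    exact_mod_cast this
  · ext t
    have := cos_sin_zero (i := 0) (j := 1) (by norm_num) t
    simp only [ofRealCM, ContinuousMap.mul_apply, ContinuousMap.coe_mk, ContinuousMap.zero_apply]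
    have h2 : Real.cos (ang 0 t) * (Real.sin (ang 1 t) * Real.cos (ang 2 t)) = 0 := by
      rw [← mul_assoc, this, zero_mul]
    exact_mod_cast h2
  · ext t
    have := cos_sin_zero (i := 1) (j := 2) (by norm_num) t
    simp only [ofRealCM, ContinuousMap.mul_apply, ContinuousMap.coe_mk, ContinuousMap.zero_apply]
    have h2 : Real.sin (ang 0 t) * Real.cos (ang 1 t) * Real.sin (ang 2 t) = 0 := by
      rw [mul_assoc, this, mul_zero]
    exact_mod_cast h2
  · ext t
    have h01 := cos_sin_zero (i := 0) (j := 1) (by norm_num) t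
    have h12 := cos_sin_zero (i := 1) (j := 2) (by norm_num) t
    have e0 := Real.sin_sq_add_cos_sq (ang 0 t)
    have e1 := Real.sin_sq_add_cos_sq (ang 1 t)
    have e2 := Real.sin_sq_add_cos_sq (ang 2 t)
    simp only [ofRealCM, ContinuousMap.mul_apply, ContinuousMap.add_apply, ContinuousMap.coe_mk,
      ContinuousMap.one_apply]
    generalize Real.sin (ang 0 t) = s0 at *
    generalize Real.sin (ang 1 t) = s1 at *
    generalize Real.sin (ang 2 t) = s2 at *
    generalize Real.cos (ang 0 t) = c0 at *
    generalize Real.cos (ang 1 t) = c1 at *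
    generalize Real.cos (ang 2 t) = c2 at *
    have : c0 * c0 + s0 * c1 * (s0 * c1) + s2 * s2 + s1 * c2 * (s1 * c2) = 1 := by
      grind
    exact_mod_cast this
  · intro t ht
    simp only [ofRealCM, ContinuousMap.coe_mk]
    rw [ang_zero (i := 0) (by linarith), ang_zero (i := 1) (by linarith),
      ang_zero (i := 2) (by linarith)]
    simp
  · intro t ht
    simp only [ofRealCM, ContinuousMap.coe_mk]
    rw [ang_one (i := 0) (by linarith), ang_one (i := 1) (by linarith),
      ang_one (i := 2) (by linarith)]
    simp

end Functions

section Patch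
variable {A E : Type} [CStarAlgebra A] [CStarAlgebra E]

lemma comb_two (ν : susp A →⋆ₙₐ[ℂ] E) {p q r s w : C(I, ℂ)} (h : p * q + r * s = w)
    (x y : susp A) :
    ν (hsmul p x) * ν (hsmul q y) + ν (hsmul r x) * ν (hsmul s y) = ν (hsmul w (x * y)) := by
  rw [← map_mul, ← map_mul, ← map_add, hsmul_mul_hsmul, hsmul_mul_hsmul, ← hsmul_add_left, h]

lemma comb_three (ν : susp A →⋆ₙₐ[ℂ] E) {p q r s m n w : C(I, ℂ)}
    (h : p * q + r * s + m * n = w) (x y : susp A) :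
    ν (hsmul p x) * ν (hsmul q y) + ν (hsmul r x) * ν (hsmul s y) +
      ν (hsmul m x) * ν (hsmul n y) = ν (hsmul w (x * y)) := by
  rw [comb_two ν rfl, ← map_mul, ← map_add, hsmul_mul_hsmul, ← hsmul_add_left, h]

lemma mul_eq_zero_same (ν : susp A →⋆ₙₐ[ℂ] E) {p q : C(I, ℂ)} (h : p * q = 0)
    (x y : susp A) : ν (hsmul p x) * ν (hsmul q y) = 0 := by
  rw [← map_mul, hsmul_mul_hsmul, h, hsmul_zero, map_zero]

lemma mul_eq_zero_diff {θ : C(I, ℂ) →⋆ₐ[ℂ] E} {ν ν' : susp A →⋆ₙₐ[ℂ] E}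
    (hν : Compatible θ ν) (hν' : Compatible θ ν') {p q : C(I, ℂ)} (h : p * q = 0)
    (x y : susp A) : ν (hsmul p x) * ν' (hsmul q y) = 0 := by
  rw [(hν p x).2, (hν' q y).1, mul_assoc, ← mul_assoc (θ p), ← map_mul, h, map_zero, zero_mul,
    mul_zero]

lemma theta_nu_theta {θ : C(I, ℂ) →⋆ₐ[ℂ] E} {ν : susp A →⋆ₙₐ[ℂ] E}
    (hν : Compatible θ ν) (p q : C(I, ℂ)) (x : susp A) :
    θ p * ν x * θ q = ν (hsmul (p * q) x) := by
  rw [← (hν p x).1, ← (hν q _).2, hsmul_hsmul, mul_comm]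

section Err
variable {v n₀ n₁ y : E} {δ : ℝ}

lemma err_left (hv : v ∈ unitary E) (h : ‖v * n₀ * star v - n₁‖ ≤ δ) :
    ‖n₀ * star v - star v * n₁‖ ≤ δ := by
  have : n₀ * star v - star v * n₁ = star v * (v * n₀ * star v - n₁) := by
    linear_combination (norm := noncomm_ring) -((Unitary.star_mul_self_of_mem hv) * n₀ * star v)
  rw [this, CStarRing.norm_mem_unitary_mul _ (Unitary.star_mem hv)]
  exact h

lemma err_right (hv : v ∈ unitary E) (h : ‖v * n₀ * star v - n₁‖ ≤ δ) :
    ‖v * n₀ - n₁ * v‖ ≤ δ := by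
  have : v * n₀ - n₁ * v = (v * n₀ * star v - n₁) * v := by
    linear_combination (norm := noncomm_ring) -(v * n₀ * (Unitary.star_mul_self_of_mem hv))
  rw [this, CStarRing.norm_mul_mem_unitary _ hv]
  exact h

/-- `n₀ v* y ≈ 0` if `n₁ y = 0`. -/
lemma err_one (hv : v ∈ unitary E) (h : ‖v * n₀ * star v - n₁‖ ≤ δ) (hy : n₁ * y = 0)
    {K : ℝ} (hK : ‖y‖ ≤ K) : ‖n₀ * star v * y‖ ≤ δ * K := by
  have : n₀ * star v * y = (n₀ * star v - star v * n₁) * y := by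
    rw [sub_mul, mul_assoc (star v), hy, mul_zero, sub_zero]
  rw [this]
  have h1 := err_left hv h
  exact (norm_mul_le _ _).trans (mul_le_mul h1 hK (norm_nonneg _) ((norm_nonneg _).trans h1))

/-- `y v n₀ ≈ 0` if `y n₁ = 0`. -/
lemma err_two (hv : v ∈ unitary E) (h : ‖v * n₀ * star v - n₁‖ ≤ δ) (hy : y * n₁ = 0)
    {K : ℝ} (hK : ‖y‖ ≤ K) : ‖y * (v * n₀)‖ ≤ δ * K := by
  have : y * (v * n₀) = y * (v * n₀ - n₁ * v) := by
    rw [mul_sub, ← mul_assoc y n₁, hy, zero_mul, sub_zero]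
  rw [this, mul_comm δ]
  have h1 := err_right hv h
  exact (norm_mul_le _ _).trans (mul_le_mul hK h1 (norm_nonneg _) ((norm_nonneg _).trans hK))

end Err

/-- The patched map. -/
def patchMap (ν₀ ν₁ : susp A →⋆ₙₐ[ℂ] E) (W₀ W₁ : Matrix (Fin 2) (Fin 2) E) :
    susp A →ₗ[ℂ] Matrix (Fin 2) (Fin 2) E where
  toFun x := star W₀ * !![ν₀ x, 0; 0, 0] * W₀ + star W₁ * !![ν₁ x, 0; 0, 0] * W₁
  map_add' x y := by
    have h (ν : susp A →⋆ₙₐ[ℂ] E) : (!![ν (x + y), 0; 0, 0] : Matrix (Fin 2) (Fin 2) E) =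
        !![ν x, 0; 0, 0] + !![ν y, 0; 0, 0] := by
      ext i j; fin_cases i <;> fin_cases j <;> simp
    rw [h, h]
    noncomm_ring
  map_smul' k x := by
    have h (ν : susp A →⋆ₙₐ[ℂ] E) : (!![ν (k • x), 0; 0, 0] : Matrix (Fin 2) (Fin 2) E) =
        k • !![ν x, 0; 0, 0] := by
      ext i j; fin_cases i <;> fin_cases j <;> simp
    rw [h, h, RingHom.id_apply, smul_add, Matrix.mul_smul, Matrix.mul_smul, Matrix.smul_mul,
      Matrix.smul_mul]

lemma patchMap_cp (ν₀ ν₁ : susp A →⋆ₙₐ[ℂ] E) (W₀ W₁ : Matrix (Fin 2) (Fin 2) E) :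
    IsCompletelyPositive (B := susp A) (C := Matrix (Fin 2) (Fin 2) E)
      (patchMap ν₀ ν₁ W₀ W₁) := by
  rintro n M ⟨y, rfl⟩
  obtain ⟨w, hw⟩ := exists_sum_sq (y.map (fun b => !![ν₀ b, 0; 0, 0] * W₀))
    (y.map (fun b => !![ν₁ b, 0; 0, 0] * W₁))
  refine ⟨w, ?_⟩
  rw [← hw]
  have hν (ν : susp A →⋆ₙₐ[ℂ] E) (n : ℕ) (u w : Fin n → susp A) :
      ν (∑ j, star (u j) * w j) = ∑ j, star (ν (u j)) * ν (w j) := by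
    simp [map_sum, map_mul, map_star]
  have q₀ := cp_piece (fun b => ν₀ b) (hν ν₀) W₀ y
  have q₁ := cp_piece (fun b => ν₁ b) (hν ν₁) W₁ y
  rw [← q₀, ← q₁]
  ext1 k l
  rfl

lemma patchMap_eq {θ : C(I, ℂ) →⋆ₐ[ℂ] E} {ν₀ ν₁ : susp A →⋆ₙₐ[ℂ] E}
    (h₀ : Compatible θ ν₀) (h₁ : Compatible θ ν₁) (v : E) {a b c d : C(I, ℂ)}
    (ha : star a = a) (hb : star b = b) (hc : star c = c) (hd : star d = d) (x : susp A) :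
    patchMap ν₀ ν₁ !![θ a, θ b * star v; 0, 0] !![θ c, θ d; 0, 0] x =
      !![ν₀ (hsmul (a * a) x) + ν₁ (hsmul (c * c) x),
         ν₀ (hsmul (a * b) x) * star v + ν₁ (hsmul (c * d) x);
         v * ν₀ (hsmul (a * b) x) + ν₁ (hsmul (c * d) x),
         v * ν₀ (hsmul (b * b) x) * star v + ν₁ (hsmul (d * d) x)] := by
  have e1 : star (θ a) = θ a := by rw [← map_star, ha]
  have e2 : star (θ b) = θ b := by rw [← map_star, hb]
  have e3 : star (θ c) = θ c := by rw [← map_star, hc]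
  have e4 : star (θ d) = θ d := by rw [← map_star, hd]
  rw [mul_comm a b, ← theta_nu_theta h₀, ← theta_nu_theta h₀, ← theta_nu_theta h₀,
    ← theta_nu_theta h₁, ← theta_nu_theta h₁, ← theta_nu_theta h₁]
  have e5 : θ b * ν₀ x * θ a = θ a * ν₀ x * θ b := by
    rw [theta_nu_theta h₀, theta_nu_theta h₀, mul_comm]
  have e6 : θ d * ν₁ x * θ c = θ c * ν₁ x * θ d := by
    rw [theta_nu_theta h₁, theta_nu_theta h₁, mul_comm]
  ext i j
  fin_cases i <;> fin_cases j
  · simp [patchMap, Matrix.mul_apply, Fin.sum_univ_two, e1, e3]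
  · simp [patchMap, Matrix.mul_apply, Fin.sum_univ_two, e1, e3, e5, mul_assoc]
  · simp [patchMap, Matrix.mul_apply, Fin.sum_univ_two, e2, e4, mul_assoc]
    simp only [← mul_assoc, e6]
  · simp [patchMap, Matrix.mul_apply, Fin.sum_univ_two, e2, e4, mul_assoc]

end Patch

section Main
variable {A E : Type} [CStarAlgebra A] [CStarAlgebra E]

lemma patch_mult {θ : C(I, ℂ) →⋆ₐ[ℂ] E} {ν₀ ν₁ : susp A →⋆ₙₐ[ℂ] E}
    (h₀ : Compatible θ ν₀) (h₁ : Compatible θ ν₁) {v : E} (hv : v ∈ unitary E)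
    {a b c d : C(I, ℂ)}
    (ha : star a = a) (hb : star b = b) (hc : star c = c) (hd : star d = d)
    (hac : a * c = 0) (had : a * d = 0) (hbc : b * c = 0)
    (hs : a * a + b * b + c * c + d * d = 1) {x y : susp A} {δ K : ℝ}
    (hG : ∀ p ∈ ({a * b, b * b, d * d} : Set C(I, ℂ)), ∀ z ∈ ({x, y} : Set (susp A)),
      ‖v * ν₀ (hsmul p z) * star v - ν₁ (hsmul p z)‖ ≤ δ)
    (hK : ∀ p ∈ ({c * d, b * b, d * d} : Set C(I, ℂ)), ∀ z ∈ ({x, y} : Set (susp A)),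
      ‖hsmul p z‖ ≤ K) :
    cstarNorm (patchMap ν₀ ν₁ !![θ a, θ b * star v; 0, 0] !![θ c, θ d; 0, 0] (x * y) -
      patchMap ν₀ ν₁ !![θ a, θ b * star v; 0, 0] !![θ c, θ d; 0, 0] x *
      patchMap ν₀ ν₁ !![θ a, θ b * star v; 0, 0] !![θ c, θ d; 0, 0] y) ≤ 8 * (δ * K) := by
  rw [patchMap_eq h₀ h₁ v ha hb hc hd, patchMap_eq h₀ h₁ v ha hb hc hd,
    patchMap_eq h₀ h₁ v ha hb hc hd]
  have hvv := Unitary.star_mul_self_of_mem hv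
  have hvs := Unitary.star_mem hv
  -- bounds
  have Kν (ν : susp A →⋆ₙₐ[ℂ] E) : ∀ p ∈ ({c * d, b * b, d * d} : Set C(I, ℂ)),
      ∀ z ∈ ({x, y} : Set (susp A)), ‖ν (hsmul p z)‖ ≤ K :=
    fun p hp z hz => (nu_norm_le ν _).trans (hK p hp z hz)
  have gabx := hG (a * b) (by simp) x (by simp)
  have gaby := hG (a * b) (by simp) y (by simp)
  have gbbx := hG (b * b) (by simp) x (by simp)
  have gbby := hG (b * b) (by simp) y (by simp)
  have gddx := hG (d * d) (by simp) x (by simp)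
  have kcdx := Kν ν₁ (c * d) (by simp) x (by simp)
  have kcdy := Kν ν₁ (c * d) (by simp) y (by simp)
  have kddx := Kν ν₁ (d * d) (by simp) x (by simp)
  have kddy := Kν ν₁ (d * d) (by simp) y (by simp)
  have kbby := Kν ν₀ (b * b) (by simp) y (by simp)
  -- exact product relations
  have t00a := comb_two ν₀ (show a * a * (a * a) + a * b * (a * b) = a * a by
    linear_combination a * a * hs - a * c * hac - a * d * had) x y
  have t00b := comb_two ν₁ (show c * c * (c * c) + c * d * (c * d) = c * c by
    linear_combination c * c * hs - a * c * hac - b * c * hbc) x y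
  have t01a := comb_two ν₀ (show a * a * (a * b) + a * b * (b * b) = a * b by
    linear_combination a * b * hs - b * c * hac - b * d * had) x y
  have t01b := comb_two ν₁ (show c * c * (c * d) + c * d * (d * d) = c * d by
    linear_combination c * d * hs - a * d * hac - b * d * hbc) x y
  have t10a := comb_two ν₀ (show a * b * (a * a) + b * b * (a * b) = a * b by
    linear_combination a * b * hs - b * c * hac - b * d * had) x y
  have t10b := comb_two ν₁ (show c * d * (c * c) + d * d * (c * d) = c * d by
    linear_combination c * d * hs - a * d * hac - b * d * hbc) x y
  have t11a := comb_three ν₀ (show a * b * (a * b) + b * b * (b * b) + d * d * (b * b) = b * b by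
    linear_combination b * b * hs - b * c * hbc) x y
  have t11b := comb_three ν₁ (show c * d * (c * d) + d * d * (d * d) + b * b * (d * d) = d * d by
    linear_combination d * d * hs - a * d * had) x y
  -- vanishing products
  have z1 := mul_eq_zero_diff h₀ h₁ (show a * a * (c * c) = 0 by
    linear_combination a * c * hac) x y
  have z2 := mul_eq_zero_diff h₁ h₀ (show c * c * (a * a) = 0 by
    linear_combination a * c * hac) x y
  have z3 := mul_eq_zero_diff h₀ h₁ (show a * a * (c * d) = 0 by
    linear_combination a * d * hac) x y
  have z4 := mul_eq_zero_diff h₁ h₀ (show c * c * (a * b) = 0 by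
    linear_combination c * b * hac) x y
  have z5 := mul_eq_zero_diff h₀ h₁ (show a * b * (c * c) = 0 by
    linear_combination c * b * hac) x y
  have z6 := mul_eq_zero_diff h₁ h₀ (show c * d * (a * a) = 0 by
    linear_combination a * d * hac) x y
  have z7 := mul_eq_zero_diff h₀ h₁ (show a * b * (c * d) = 0 by
    linear_combination b * d * hac) x y
  have z8 := mul_eq_zero_diff h₁ h₀ (show c * d * (a * b) = 0 by
    linear_combination b * d * hac) x y
  have w1 := mul_eq_zero_same ν₁ (show a * b * (c * d) = 0 by
    linear_combination b * d * hac) x y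
  have w2 := mul_eq_zero_same ν₁ (show c * d * (a * b) = 0 by
    linear_combination b * d * hac) x y
  have w3 := mul_eq_zero_same ν₁ (show a * b * (d * d) = 0 by
    linear_combination b * d * had) x y
  have w4 := mul_eq_zero_same ν₁ (show c * d * (b * b) = 0 by
    linear_combination b * d * hbc) x y
  have w5 := mul_eq_zero_same ν₁ (show b * b * (c * d) = 0 by
    linear_combination b * d * hbc) x y
  have w6 := mul_eq_zero_same ν₁ (show d * d * (a * b) = 0 by
    linear_combination b * d * had) x y
  -- error terms
  have r1 := err_one hv gabx w1 kcdy
  have r2 := err_two hv gaby w2 kcdx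
  have r3 := err_one hv gabx w3 kddy
  have r4 := err_two hv gbby w4 kcdx
  have r5 := err_one hv gbbx w5 kcdy
  have r6 := err_two hv gaby w6 kddx
  have r7 : ‖(v * ν₀ (hsmul (b * b) x) * star v - ν₁ (hsmul (b * b) x)) * ν₁ (hsmul (d * d) y)‖
      ≤ δ * K := (norm_mul_le _ _).trans
        (mul_le_mul gbbx kddy (norm_nonneg _) ((norm_nonneg _).trans gbbx))
  have r8 : ‖(v * ν₀ (hsmul (d * d) x) - ν₁ (hsmul (d * d) x) * v) * ν₀ (hsmul (b * b) y)‖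
      ≤ δ * K := (norm_mul_le _ _).trans
        (mul_le_mul (err_right hv gddx) kbby (norm_nonneg _) ((norm_nonneg _).trans gddx))
  refine (cstarNorm_le_sum _).trans ?_
  simp only [Matrix.sub_apply, Matrix.mul_apply, Fin.sum_univ_two, Matrix.of_apply,
    Matrix.cons_val_zero, Matrix.cons_val_one, Matrix.cons_val', Matrix.cons_val_fin_one]
  rw [← t00a, ← t00b, ← t01a, ← t01b]
  have b00 := norm_add_le (ν₀ (hsmul (a * b) x) * star v * ν₁ (hsmul (c * d) y))
    (ν₁ (hsmul (c * d) x) * (v * ν₀ (hsmul (a * b) y)))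
  have b01 := norm_add_le (ν₀ (hsmul (a * b) x) * star v * ν₁ (hsmul (d * d) y))
    (ν₁ (hsmul (c * d) x) * (v * ν₀ (hsmul (b * b) y)) * star v)
  have b10 := norm_add_le (v * (ν₀ (hsmul (b * b) x) * star v * ν₁ (hsmul (c * d) y)))
    (ν₁ (hsmul (d * d) x) * (v * ν₀ (hsmul (a * b) y)))
  have b11 := norm_sub_le
    ((v * ν₀ (hsmul (d * d) x) - ν₁ (hsmul (d * d) x) * v) * ν₀ (hsmul (b * b) y) * star v)
    ((v * ν₀ (hsmul (b * b) x) * star v - ν₁ (hsmul (b * b) x)) * ν₁ (hsmul (d * d) y))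
  rw [CStarRing.norm_mul_mem_unitary _ hvs] at b01 b11
  rw [CStarRing.norm_mem_unitary_mul _ hv] at b10
  rw [← norm_neg] at b00 b01 b10
  have e00 : ‖_‖ = _ := congrArg norm (show
    ν₀ (hsmul (a * a) x) * ν₀ (hsmul (a * a) y) + ν₀ (hsmul (a * b) x) * ν₀ (hsmul (a * b) y) +
      (ν₁ (hsmul (c * c) x) * ν₁ (hsmul (c * c) y) + ν₁ (hsmul (c * d) x) * ν₁ (hsmul (c * d) y)) -
      ((ν₀ (hsmul (a * a) x) + ν₁ (hsmul (c * c) x)) *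
        (ν₀ (hsmul (a * a) y) + ν₁ (hsmul (c * c) y)) +
       (ν₀ (hsmul (a * b) x) * star v + ν₁ (hsmul (c * d) x)) *
        (v * ν₀ (hsmul (a * b) y) + ν₁ (hsmul (c * d) y))) =
    -(ν₀ (hsmul (a * b) x) * star v * ν₁ (hsmul (c * d) y) +
    ν₁ (hsmul (c * d) x) * (v * ν₀ (hsmul (a * b) y))) by
      linear_combination (norm := noncomm_ring) -z1 - z2 -
        ν₀ (hsmul (a * b) x) * hvv * ν₀ (hsmul (a * b) y))
  have e01 : ‖_‖ = _ := congrArg norm (show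
    (ν₀ (hsmul (a * a) x) * ν₀ (hsmul (a * b) y) + ν₀ (hsmul (a * b) x) * ν₀ (hsmul (b * b) y)) *
      star v +
      (ν₁ (hsmul (c * c) x) * ν₁ (hsmul (c * d) y) + ν₁ (hsmul (c * d) x) * ν₁ (hsmul (d * d) y)) -
      ((ν₀ (hsmul (a * a) x) + ν₁ (hsmul (c * c) x)) *
        (ν₀ (hsmul (a * b) y) * star v + ν₁ (hsmul (c * d) y)) +
       (ν₀ (hsmul (a * b) x) * star v + ν₁ (hsmul (c * d) x)) *
        (v * ν₀ (hsmul (b * b) y) * star v + ν₁ (hsmul (d * d) y))) =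
    -(ν₀ (hsmul (a * b) x) * star v * ν₁ (hsmul (d * d) y) +
    ν₁ (hsmul (c * d) x) * (v * ν₀ (hsmul (b * b) y)) * star v) by
      linear_combination (norm := noncomm_ring) -z3 - z4 * star v -
        ν₀ (hsmul (a * b) x) * hvv * ν₀ (hsmul (b * b) y) * star v)
  have e10 : ‖_‖ = _ := congrArg norm (show
    v * (ν₀ (hsmul (a * a) x) * ν₀ (hsmul (a * b) y) +
        ν₀ (hsmul (a * b) x) * ν₀ (hsmul (b * b) y)) +
      (ν₁ (hsmul (c * c) x) * ν₁ (hsmul (c * d) y) + ν₁ (hsmul (c * d) x) * ν₁ (hsmul (d * d) y)) -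
      ((v * ν₀ (hsmul (a * b) x) + ν₁ (hsmul (c * d) x)) *
        (ν₀ (hsmul (a * a) y) + ν₁ (hsmul (c * c) y)) +
       (v * ν₀ (hsmul (b * b) x) * star v + ν₁ (hsmul (d * d) x)) *
        (v * ν₀ (hsmul (a * b) y) + ν₁ (hsmul (c * d) y))) =
    -(v * (ν₀ (hsmul (b * b) x) * star v * ν₁ (hsmul (c * d) y)) +
    ν₁ (hsmul (d * d) x) * (v * ν₀ (hsmul (a * b) y))) by
      rw [t01a, t01b, ← t10a, ← t10b]
      linear_combination (norm := noncomm_ring) - v * z5 - z6 -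
        v * ν₀ (hsmul (b * b) x) * hvv * ν₀ (hsmul (a * b) y))
  have e11 : ‖_‖ = _ := congrArg norm (show
    v * ν₀ (hsmul (b * b) (x * y)) * star v + ν₁ (hsmul (d * d) (x * y)) -
      ((v * ν₀ (hsmul (a * b) x) + ν₁ (hsmul (c * d) x)) *
        (ν₀ (hsmul (a * b) y) * star v + ν₁ (hsmul (c * d) y)) +
       (v * ν₀ (hsmul (b * b) x) * star v + ν₁ (hsmul (d * d) x)) *
        (v * ν₀ (hsmul (b * b) y) * star v + ν₁ (hsmul (d * d) y))) =
    (v * ν₀ (hsmul (d * d) x) - ν₁ (hsmul (d * d) x) * v) * ν₀ (hsmul (b * b) y) * star v -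
    (v * ν₀ (hsmul (b * b) x) * star v - ν₁ (hsmul (b * b) x)) * ν₁ (hsmul (d * d) y) by
      rw [← t11a, ← t11b]
      linear_combination (norm := noncomm_ring) - v * z7 - z8 * star v -
        v * ν₀ (hsmul (b * b) x) * hvv * ν₀ (hsmul (b * b) y) * star v)
  rw [e00, e01, e10, e11]
  linarith

lemma patch_compat {θ : C(I, ℂ) →⋆ₐ[ℂ] E} {ν₀ ν₁ : susp A →⋆ₙₐ[ℂ] E}
    (h₀ : Compatible θ ν₀) (h₁ : Compatible θ ν₁) {v : E} (hv : v ∈ unitary E)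
    {a b c d : C(I, ℂ)}
    (ha : star a = a) (hb : star b = b) (hc : star c = c) (hd : star d = d)
    {x : susp A} {h : C(I, ℂ)} {δ K : ℝ}
    (hG : ∀ p ∈ ({a * b, b * b, d * d} : Set C(I, ℂ)), ∀ z ∈ ({x, hsmul h x} : Set (susp A)),
      ‖v * ν₀ (hsmul p z) * star v - ν₁ (hsmul p z)‖ ≤ δ)
    (hK : ‖h‖ ≤ K) (hK1 : 1 ≤ K) :
    cstarNorm (patchMap ν₀ ν₁ !![θ a, θ b * star v; 0, 0] !![θ c, θ d; 0, 0] (hsmul h x) -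
      Matrix.diagonal (fun _ => θ h) *
      patchMap ν₀ ν₁ !![θ a, θ b * star v; 0, 0] !![θ c, θ d; 0, 0] x) ≤ 8 * (δ * K) := by
  rw [patchMap_eq h₀ h₁ v ha hb hc hd, patchMap_eq h₀ h₁ v ha hb hc hd]
  have hvv := Unitary.star_mul_self_of_mem hv
  have sw (ν : susp A →⋆ₙₐ[ℂ] E) (hν : Compatible θ ν) (p : C(I, ℂ)) :
      θ h * ν (hsmul p x) = ν (hsmul p (hsmul h x)) := by
    rw [← (hν _ _).1, hsmul_hsmul, hsmul_hsmul, mul_comm]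
  have hθ : ‖θ h‖ ≤ K := (NonUnitalStarAlgHom.norm_apply_le θ h).trans hK
  have key (p : C(I, ℂ)) (hp : p ∈ ({a * b, b * b, d * d} : Set C(I, ℂ))) :
      ‖v * ν₀ (hsmul p (hsmul h x)) * star v - θ h * (v * ν₀ (hsmul p x) * star v)‖
        ≤ 2 * (δ * K) := by
    have g1 := hG p hp x (by simp)
    have g2 := hG p hp (hsmul h x) (by simp)
    have e : v * ν₀ (hsmul p (hsmul h x)) * star v - θ h * (v * ν₀ (hsmul p x) * star v) =
      (v * ν₀ (hsmul p (hsmul h x)) * star v - ν₁ (hsmul p (hsmul h x))) -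
        θ h * (v * ν₀ (hsmul p x) * star v - ν₁ (hsmul p x)) := by
      rw [← sw ν₁ h₁]; noncomm_ring
    rw [e]
    have hδ : 0 ≤ δ := (norm_nonneg _).trans g1
    have m1 : ‖θ h * (v * ν₀ (hsmul p x) * star v - ν₁ (hsmul p x))‖ ≤ K * δ :=
      (norm_mul_le _ _).trans (mul_le_mul hθ g1 (norm_nonneg _) (by linarith))
    refine (norm_sub_le _ _).trans ?_
    nlinarith
  refine (cstarNorm_le_sum _).trans ?_
  simp only [Matrix.sub_apply, Matrix.diagonal_mul, Matrix.of_apply,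
    Matrix.cons_val_zero, Matrix.cons_val_one, Matrix.cons_val', Matrix.cons_val_fin_one, mul_add]
  rw [sw ν₀ h₀, sw ν₁ h₁, sw ν₁ h₁, sw ν₁ h₁, ← mul_assoc (θ h) (ν₀ _), sw ν₀ h₀, sub_self,
    sub_self, norm_zero, add_sub_add_right_eq_sub, add_sub_add_right_eq_sub]
  have k1 := key (b * b) (by simp)
  have k2 := key (a * b) (by simp)
  have k3 : ‖v * ν₀ (hsmul (a * b) (hsmul h x)) - θ h * (v * ν₀ (hsmul (a * b) x))‖
      ≤ 2 * (δ * K) := by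
    rw [← CStarRing.norm_mul_mem_unitary _ (Unitary.star_mem hv), sub_mul,
      mul_assoc (θ h)]
    exact k2
  have := (norm_nonneg _).trans k1
  linarith

end Main

/-- **Approximate patching** (Remark 4.2 of Tikuisis–White–Winter). Given finite sets
`F ⊂ C₀((0,1),A)`, `F' ⊂ C([0,1])` and a tolerance `η > 0`, there are a finite set
`G ⊂ C₀((1/3,2/3),A)` and `δ > 0` such that whenever `ν₀, ν₁ : C₀((0,1),A) → E` are
`θ`-compatible *-homomorphisms and `v` is a unitary with `‖v ν₀(x) v* − ν₁(x)‖ ≤ δ` on `G`,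
there is a completely positive `ρ : C₀((0,1),A) → M₂(E)` recovering `ν₀ ⊕ 0` on `(0,1/3)`,
`ν₁ ⊕ 0` on `(2/3,1)`, matching traces, and `η`-multiplicative on `F` and `η`-compatible with
`θ^{⊕2}` on `F × F'`. -/
theorem approximate_patching {A : Type} [CStarAlgebra A]
    (F : Finset ↥(susp A)) (F' : Finset C(I, ℂ)) (η : ℝ) (hη : 0 < η) :
    ∃ G : Finset ↥(susp A),
      (∀ x ∈ G, ∀ t : I, (t : ℝ) ∉ Set.Ioo (1/3 : ℝ) (2/3) → (x : C(I, A)) t = 0) ∧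
      ∃ δ : ℝ, 0 < δ ∧
        ∀ (E : Type) [CStarAlgebra E],
          ∀ (θ : C(I, ℂ) →⋆ₐ[ℂ] E) (ν₀ ν₁ : susp A →⋆ₙₐ[ℂ] E) (v : E),
            Compatible θ ν₀ → Compatible θ ν₁ → v ∈ unitary E →
            (∀ x ∈ G, ‖v * ν₀ x * star v - ν₁ x‖ ≤ δ) →
            ∃ ρ : susp A →ₗ[ℂ] Matrix (Fin 2) (Fin 2) E,
              IsCompletelyPositive (B := susp A) (C := Matrix (Fin 2) (Fin 2) E) ρ ∧
              -- (i)
              (∀ x : susp A,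
                (∀ t : I, (t : ℝ) ∉ Set.Ioo (0 : ℝ) (1/3) → (x : C(I, A)) t = 0) →
                ρ x = !![ν₀ x, 0; 0, 0]) ∧
              -- (ii)
              (∀ x : susp A,
                (∀ t : I, (t : ℝ) ∉ Set.Ioo (2/3 : ℝ) 1 → (x : C(I, A)) t = 0) →
                ρ x = !![ν₁ x, 0; 0, 0]) ∧
              -- (iii)
              (∀ τ : E →L[ℂ] ℂ, IsTracialState τ → (∀ x : susp A, τ (ν₀ x) = τ (ν₁ x)) →
                ∀ x : susp A, τ (ρ x 0 0) + τ (ρ x 1 1) = τ (ν₀ x)) ∧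
              -- (iv)
              (∀ x ∈ F, ∀ y ∈ F, cstarNorm (ρ (x * y) - ρ x * ρ y) ≤ η) ∧
              -- (v)
              (∀ x ∈ F, ∀ h ∈ F',
                cstarNorm (ρ (hsmul h x) - Matrix.diagonal (fun _ => θ h) * ρ x) ≤ η) := by
  classical
  obtain ⟨a, b, c, d, ha, hb, hc, hd, hac, had, hbc, hs, hleft, hright⟩ := exists_functions
  let P : Finset C(I, ℂ) := {a * b, b * b, d * d}
  let Q : Finset C(I, ℂ) := {c * d, b * b, d * d}
  let X : Finset (susp A) := F ∪ (F' ×ˢ F).image (fun q => hsmul q.1 q.2)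
  let G : Finset (susp A) := (P ×ˢ X).image (fun q => hsmul q.1 q.2)
  have hGmem : ∀ p ∈ P, ∀ x ∈ X, hsmul p x ∈ G := fun p hp x hx =>
    Finset.mem_image.2 ⟨(p, x), Finset.mem_product.2 ⟨hp, hx⟩, rfl⟩
  obtain ⟨K₁, hK₁⟩ := ((Q ×ˢ F).image (fun q => ‖hsmul q.1 q.2‖)).bddAbove
  obtain ⟨K₂, hK₂⟩ := (F'.image (fun h => ‖h‖)).bddAbove
  let K : ℝ := max 1 (max K₁ K₂)
  have hK1 : 1 ≤ K := le_max_left _ _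
  have hKQ : ∀ p ∈ Q, ∀ x ∈ F, ‖hsmul p x‖ ≤ K := fun p hp x hx =>
    (hK₁ (Finset.mem_coe.2 (Finset.mem_image.2
      ⟨(p, x), Finset.mem_product.2 ⟨hp, hx⟩, rfl⟩))).trans
      ((le_max_left _ _).trans (le_max_right _ _))
  have hKF' : ∀ h ∈ F', ‖h‖ ≤ K := fun h hh =>
    (hK₂ (Finset.mem_coe.2 (Finset.mem_image.2 ⟨h, hh, rfl⟩))).trans
      ((le_max_right _ _).trans (le_max_right _ _))
  refine ⟨G, ?_, η / (8 * K), by positivity, ?_⟩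
  · intro x hx t ht
    obtain ⟨⟨p, z⟩, hpz, rfl⟩ := Finset.mem_image.1 hx
    have hp : p ∈ P := (Finset.mem_product.1 hpz).1
    have hbd : b t = 0 ∧ d t = 0 := by
      rcases le_or_gt (t : ℝ) (1 / 3) with h | h
      · exact ⟨(hleft t h).1, (hleft t h).2.2⟩
      · rcases le_or_gt (2 / 3 : ℝ) (t : ℝ) with h' | h'
        · exact (hright t h').2
        · exact absurd ⟨h, h'⟩ ht
    have hp0 : p t = 0 := by
      simp only [P, Finset.mem_insert, Finset.mem_singleton] at hp
      rcases hp with rfl | rfl | rfl <;> simp [hbd.1, hbd.2]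
    simp [hsmul_apply, hp0]
  intro E _ θ ν₀ ν₁ v h₀ h₁ hv hG
  have hδK : 8 * (η / (8 * K) * K) = η := by field_simp
  refine ⟨patchMap ν₀ ν₁ !![θ a, θ b * star v; 0, 0] !![θ c, θ d; 0, 0],
    patchMap_cp _ _ _ _, ?_, ?_, ?_, ?_, ?_⟩
  · intro x hx
    have hz : ∀ q : C(I, ℂ), (∀ t : I, (t : ℝ) ≤ 1 / 3 → q t = 0) → hsmul q x = 0 := fun q hq =>
      hsmul_ext fun t => by
        by_cases ht : (t : ℝ) ∈ Set.Ioo (0 : ℝ) (1 / 3)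
        · simp [hsmul_apply, hq t ht.2.le]
        · simp [hsmul_apply, hx t ht]
    have z1 := hz (a * b) fun t ht => by simp [(hleft t ht).1]
    have z2 := hz (b * b) fun t ht => by simp [(hleft t ht).1]
    have z3 := hz (c * c) fun t ht => by simp [(hleft t ht).2.1]
    have z4 := hz (c * d) fun t ht => by simp [(hleft t ht).2.1]
    have z5 := hz (d * d) fun t ht => by simp [(hleft t ht).2.2]
    have z6 : hsmul (a * a) x = x := by
      conv_rhs => rw [← hsmul_one x, ← hs]
      rw [hsmul_add_left, hsmul_add_left, hsmul_add_left, z2, z3, z5]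
      simp
    rw [patchMap_eq h₀ h₁ v ha hb hc hd, z1, z2, z3, z4, z5, z6]
    simp
  · intro x hx
    have hz : ∀ q : C(I, ℂ), (∀ t : I, 2 / 3 ≤ (t : ℝ) → q t = 0) → hsmul q x = 0 := fun q hq =>
      hsmul_ext fun t => by
        by_cases ht : (t : ℝ) ∈ Set.Ioo (2 / 3 : ℝ) 1
        · simp [hsmul_apply, hq t ht.1.le]
        · simp [hsmul_apply, hx t ht]
    have z1 := hz (a * b) fun t ht => by simp [(hright t ht).1]
    have z2 := hz (b * b) fun t ht => by simp [(hright t ht).2.1]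
    have z3 := hz (a * a) fun t ht => by simp [(hright t ht).1]
    have z4 := hz (c * d) fun t ht => by simp [(hright t ht).2.2]
    have z5 := hz (d * d) fun t ht => by simp [(hright t ht).2.2]
    have z6 : hsmul (c * c) x = x := by
      conv_rhs => rw [← hsmul_one x, ← hs]
      rw [hsmul_add_left, hsmul_add_left, hsmul_add_left, z2, z3, z5]
      simp
    rw [patchMap_eq h₀ h₁ v ha hb hc hd, z1, z2, z3, z4, z5, z6]
    simp
  · intro τ hτ hτν x
    have hvv := Unitary.star_mul_self_of_mem hv
    have e : τ (v * ν₀ (hsmul (b * b) x) * star v) = τ (ν₀ (hsmul (b * b) x)) := by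
      rw [hτ.2.2, ← mul_assoc, hvv, one_mul]
    rw [patchMap_eq h₀ h₁ v ha hb hc hd]
    simp only [Matrix.of_apply, Matrix.cons_val_zero, Matrix.cons_val_one, Matrix.cons_val',
      Matrix.cons_val_fin_one, map_add]
    rw [e, ← hτν, ← hτν]
    conv_rhs => rw [← hsmul_one x, ← hs]
    rw [hsmul_add_left, hsmul_add_left, hsmul_add_left, map_add, map_add, map_add, map_add, map_add,
      map_add]
    ring
  · intro x hx y hy
    rw [← hδK]
    refine patch_mult h₀ h₁ hv ha hb hc hd hac had hbc hs ?_ ?_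
    · intro p hp z hz
      refine hG _ (hGmem p (by simpa [P] using hp) z (Finset.mem_union_left _ ?_))
      rcases hz with rfl | rfl <;> assumption
    · intro p hp z hz
      refine hKQ p (by simpa [Q] using hp) z ?_
      rcases hz with rfl | rfl <;> assumption
  · intro x hx h hh
    rw [← hδK]
    refine patch_compat h₀ h₁ hv ha hb hc hd ?_ (hKF' h hh) hK1
    intro p hp z hz
    refine hG _ (hGmem p (by simpa [P] using hp) z ?_)
    rcases hz with rfl | rfl
    · exact Finset.mem_union_left _ hx
    · exact Finset.mem_union_right _ (Finset.mem_image.2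
        ⟨(h, x), Finset.mem_product.2 ⟨hh, hx⟩, rfl⟩)
end
end

section
/- Let A be a unital C*-algebra with strict comparison of positive elements with respect to bounded traces. Suppose a₁, a₂ ∈ A are positive contractions such that for every tracial state τ on A and every nonzero continuous function h : [0,1] → [0,∞) with h(0) = 0 one has τ(h(a₁)) = τ(h(a₂)) > 0. Then for every nonzero continuous h : [0,1] → [0,∞) with h(0) = 0, the elements h(a₁) and h(a₂) are Cuntz equivalent in A. -/
open scoped ComplexOrder ENNReal

set_option synthInstance.maxHeartbeats 1000000
set_option maxHeartbeats 1000000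

noncomputable section

/-- `a` is Cuntz below `b` (in a matrix algebra over a C*-algebra):
`a = lim xₙ b xₙ*`, with respect to the C*-norm. -/
def CuntzBelowIn {B : Type} [Ring B] [StarRing B] [Algebra ℂ B] (a b : B) : Prop :=
  ∃ x : ℕ → B,
    Filter.Tendsto (fun n => cstarNorm (a - x n * b * star (x n))) Filter.atTop (nhds 0)

/-- `L = d_{τ⊗Trₖ}(a) = limₙ (τ⊗Trₖ)(a^{1/n})`, encoded via a sequence of positive `n`-th
roots of `a` (which are unique when they exist, so this determines `L`). -/
def IsDLimit {A : Type} [CStarAlgebra A] {k : ℕ} (τ : A →L[ℂ] ℂ)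
    (a : Matrix (Fin k) (Fin k) A) (L : ℝ) : Prop :=
  ∃ r : ℕ → Matrix (Fin k) (Fin k) A,
    (∀ n, (∃ y : Matrix (Fin k) (Fin k) A, r n = star y * y) ∧ r n ^ (n + 1) = a) ∧
    Filter.Tendsto (fun n => ∑ i, τ (r n i i)) Filter.atTop (nhds (L : ℂ))

/-- Strict comparison of positive elements with respect to bounded traces: for positive
matrices `a, b` over `A`, if `d_{τ⊗Trₖ}(a) < d_{τ⊗Trₖ}(b)` for every tracial state `τ`,
then `a` is Cuntz below `b`. -/
def StrictComparison (A : Type) [CStarAlgebra A] : Prop :=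
  ∀ (k : ℕ) (a b : Matrix (Fin k) (Fin k) A),
    (∃ y : Matrix (Fin k) (Fin k) A, a = star y * y) →
    (∃ y : Matrix (Fin k) (Fin k) A, b = star y * y) →
    (∀ (τ : A →L[ℂ] ℂ), IsTracialState τ → ∀ (La Lb : ℝ),
      IsDLimit τ a La → IsDLimit τ b Lb → La < Lb) →
    CuntzBelowIn a b

/-- `a` is Cuntz below `b` in a C*-algebra: `a = lim xₙ b xₙ*`. -/
def CuntzBelow {B : Type} [NonUnitalNormedRing B] [StarRing B] (a b : B) : Prop :=
  ∃ x : ℕ → B,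
    Filter.Tendsto (fun n => ‖a - x n * b * star (x n)‖) Filter.atTop (nhds 0)

theorem isSelfAdjoint_of_pos {A : Type} [CStarAlgebra A] {a : A} (h : ∃ y, a = star y * y) :
    IsSelfAdjoint a := by
  obtain ⟨y, rfl⟩ := h
  exact IsSelfAdjoint.star_mul_self y

theorem cfc_pos_form {A : Type} [CStarAlgebra A] {a : A} (ha : IsSelfAdjoint a)
    (f : ℝ → ℝ) (hf : Continuous f) (h0 : ∀ t, 0 ≤ f t) :
    ∃ y : A, cfc f a = star y * y := by
  refine ⟨cfc (fun t => Real.sqrt (f t)) a, ?_⟩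
  have hc : Continuous (fun t => Real.sqrt (f t)) := Real.continuous_sqrt.comp hf
  have hs : IsSelfAdjoint (cfc (fun t => Real.sqrt (f t)) a) := cfc_predicate _ a
  rw [hs.star_eq, ← cfc_mul _ _ a hc.continuousOn hc.continuousOn]
  congr 1
  funext t
  exact (Real.mul_self_sqrt (h0 t)).symm

theorem root_unique {A : Type} [CStarAlgebra A] {a r : A} (ha : IsSelfAdjoint a)
    (f : ℝ → ℝ) (hf : Continuous f) (n : ℕ)
    (hr : ∃ y : A, r = star y * y) (hrn : r ^ (n + 1) = cfc f a) :
    r = cfc (fun t => (f t) ^ ((1 : ℝ) / ((n : ℝ) + 1))) a := by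
  have hsa := isSelfAdjoint_of_pos hr
  have hexp : (0 : ℝ) ≤ (1 : ℝ) / ((n : ℝ) + 1) := by positivity
  have hcont : Continuous (fun t : ℝ => t ^ ((1 : ℝ) / ((n : ℝ) + 1))) :=
    Real.continuous_rpow_const hexp
  have h1 : cfc (fun t : ℝ => (f t) ^ ((1 : ℝ) / ((n : ℝ) + 1))) a
      = cfc (fun t : ℝ => t ^ ((1 : ℝ) / ((n : ℝ) + 1))) (cfc f a) :=
    cfc_comp' (fun t : ℝ => t ^ ((1 : ℝ) / ((n : ℝ) + 1))) f a hcont.continuousOn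
      hf.continuousOn ha
  rw [h1, ← hrn, ← cfc_comp_pow (fun t : ℝ => t ^ ((1 : ℝ) / ((n : ℝ) + 1))) (n + 1) r
    hcont.continuousOn hsa]
  conv_lhs => rw [← cfc_id ℝ r hsa]
  apply cfc_congr
  intro t ht
  have ht0 : 0 ≤ t := by
    obtain ⟨y, rfl⟩ := hr
    exact spectrum_star_mul_self_nonneg t ht
  have := Real.pow_rpow_inv_natCast ht0 (Nat.succ_ne_zero n)
  simp only [id, one_div]
  push_cast at this
  simpa using this.symm

/-- One-by-one matrices over `A` are `A`. -/
def matOne (A : Type) [CStarAlgebra A] : Matrix (Fin 1) (Fin 1) A ≃ₐ[ℂ] A where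
  toFun m := m 0 0
  invFun x := Matrix.of fun _ _ => x
  left_inv m := by
    ext i j
    rw [Subsingleton.elim i 0, Subsingleton.elim j 0]
    rfl
  right_inv x := rfl
  map_mul' x y := by simp [Matrix.mul_apply]
  map_add' x y := rfl
  commutes' r := by simp [Matrix.algebraMap_matrix_apply]

theorem cstarNorm_matrix_one {A : Type} [CStarAlgebra A] (m : Matrix (Fin 1) (Fin 1) A) :
    cstarNorm m = ‖m 0 0‖ := by
  have h1 : spectralRadius ℂ (star m * m) = spectralRadius ℂ (star (m 0 0) * m 0 0) := by
    have := AlgEquiv.spectrum_eq (matOne A)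
      (star m * m)
    unfold spectralRadius
    rw [← this]
    have h2 : (matOne A) (star m * m)
      = star (m 0 0) * m 0 0 := by
      change (star m * m) 0 0 = _
      simp [Matrix.mul_apply, Matrix.star_apply]
    rw [h2]
  unfold cstarNorm
  rw [h1, (IsSelfAdjoint.star_mul_self (m 0 0)).spectralRadius_eq_nnnorm]
  simp [CStarRing.norm_star_mul_self]

theorem dlimit_form {A : Type} [CStarAlgebra A] {a : A} (ha : IsSelfAdjoint a)
    (f : ℝ → ℝ) (hf : Continuous f) (τ : A →L[ℂ] ℂ) (L : ℝ)
    (h : IsDLimit τ (Matrix.of fun _ _ => cfc f a : Matrix (Fin 1) (Fin 1) A) L) :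
    Filter.Tendsto (fun n : ℕ => τ (cfc (fun t => (f t) ^ ((1 : ℝ) / ((n : ℝ) + 1))) a))
      Filter.atTop (nhds (L : ℂ)) := by
  obtain ⟨r, hr, hlim⟩ := h
  refine hlim.congr fun n => ?_
  obtain ⟨⟨y, hy⟩, hp⟩ := hr n
  have hpow : (r n 0 0) ^ (n + 1) = cfc f a := by
    have := congrArg (matOne A) hp
    rw [map_pow] at this
    exact this
  have hpos : ∃ y : A, r n 0 0 = star y * y := by
    refine ⟨y 0 0, ?_⟩
    rw [hy]
    simp [Matrix.mul_apply, Matrix.star_apply]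
  rw [← root_unique ha f hf n hpos hpow]
  simp

theorem cuntz_cut {A : Type} [CStarAlgebra A]
    (hsc : StrictComparison A)
    (a b : A) (ha : IsSelfAdjoint a) (hb : IsSelfAdjoint b)
    (htr : ∀ (τ : A →L[ℂ] ℂ), IsTracialState τ →
      ∀ h : ℝ → ℝ, Continuous h → (∀ t, 0 ≤ h t) → h 0 = 0 →
        (∃ t ∈ Set.Ioc (0 : ℝ) 1, h t ≠ 0) →
        τ (cfc h a) = τ (cfc h b) ∧ 0 < τ (cfc h a))
    (h : ℝ → ℝ) (hh : Continuous h) (h0 : ∀ t, 0 ≤ h t) (hz : h 0 = 0)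
    (hne : ∃ t ∈ Set.Ioc (0 : ℝ) 1, h t ≠ 0) (ε : ℝ) (hε : 0 < ε) (hε1 : ε ≤ 1) :
    CuntzBelow (cfc (fun t => max (h t - ε) 0) a) (cfc h b) := by
  have hfc : Continuous (fun t => max (h t - ε) 0) := by fun_prop
  have key := hsc 1 (Matrix.of fun _ _ => cfc (fun t => max (h t - ε) 0) a)
    (Matrix.of fun _ _ => cfc h b) ?_ ?_ ?_
  · obtain ⟨x, hx⟩ := key
    refine ⟨fun n => x n 0 0, hx.congr fun n => ?_⟩
    rw [cstarNorm_matrix_one]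
    simp [Matrix.mul_apply, Matrix.star_apply, Matrix.sub_apply]
  · obtain ⟨y, hy⟩ := cfc_pos_form ha _ hfc (fun t => le_max_right _ _)
    refine ⟨Matrix.of fun _ _ => y, ?_⟩
    ext i j
    simp [Matrix.mul_apply, Matrix.star_apply, hy]
  · obtain ⟨y, hy⟩ := cfc_pos_form hb _ hh h0
    refine ⟨Matrix.of fun _ _ => y, ?_⟩
    ext i j
    simp [Matrix.mul_apply, Matrix.star_apply, hy]
  · intro τ hτ La Lb hLa hLb
    have hA := dlimit_form ha _ hfc τ La hLa
    have hB := dlimit_form hb _ hh τ Lb hLb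
    -- the gap function
    set g : ℝ → ℝ := fun t => max (min (h t) (ε - h t)) 0 with hg
    have hgc : Continuous g := by fun_prop
    have hgne : ∃ t ∈ Set.Ioc (0 : ℝ) 1, g t ≠ 0 := by
      obtain ⟨t, ht, hne⟩ := hne
      have htpos : 0 < h t := lt_of_le_of_ne (h0 t) hne.symm
      have hv : min ε (h t) / 2 ∈ Set.Icc (h 0) (h t) := by
        rw [hz]
        have : 0 < min ε (h t) := lt_min hε htpos
        have := min_le_right ε (h t)
        constructor <;> linarith
      obtain ⟨s, hs, hsv⟩ := intermediate_value_Icc ht.1.le hh.continuousOn hv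
      have hm : 0 < min ε (h t) := lt_min hε htpos
      have hm2 := min_le_left ε (h t)
      have hs0 : s ≠ 0 := by
        rintro rfl
        rw [hz] at hsv
        linarith
      refine ⟨s, ⟨lt_of_le_of_ne hs.1 hs0.symm, hs.2.trans ht.2⟩, ?_⟩
      have : 0 < g s := by
        refine lt_max_of_lt_left (lt_min ?_ ?_) <;> linarith
      exact this.ne'
    have hg0 : g 0 = 0 := by
      simp [hg, hz]
    have hgpos := (htr τ hτ g hgc (fun t => le_max_right _ _) hg0 hgne).2
    have hineq : ∀ n : ℕ,
        τ (cfc (fun t => (max (h t - ε) 0) ^ ((1 : ℝ) / ((n : ℝ) + 1))) a) + τ (cfc g a)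
          ≤ τ (cfc (fun t => (h t) ^ ((1 : ℝ) / ((n : ℝ) + 1))) b) := by
      intro n
      have hexp : (0 : ℝ) < (1 : ℝ) / ((n : ℝ) + 1) := by positivity
      have hexp1 : (1 : ℝ) / ((n : ℝ) + 1) ≤ 1 := by
        rw [div_le_one (by positivity)]
        have : (0 : ℝ) ≤ n := Nat.cast_nonneg n
        linarith
      have hc1 : Continuous (fun t => (max (h t - ε) 0) ^ ((1 : ℝ) / ((n : ℝ) + 1))) :=
        (Real.continuous_rpow_const hexp.le).comp hfc
      have hc2 : Continuous (fun t => (h t) ^ ((1 : ℝ) / ((n : ℝ) + 1))) :=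
        (Real.continuous_rpow_const hexp.le).comp hh
      have heq := (htr τ hτ _ hc2 (fun t => Real.rpow_nonneg (h0 t) _)
        (by simp only [hz]; exact Real.zero_rpow hexp.ne') (by
          obtain ⟨t, ht, hne⟩ := hne
          have htpos : 0 < h t := lt_of_le_of_ne (h0 t) hne.symm
          exact ⟨t, ht, (Real.rpow_pos_of_pos htpos _).ne'⟩)).1
      rw [← heq]
      have hc12 : Continuous (fun t => (max (h t - ε) 0) ^ ((1 : ℝ) / ((n : ℝ) + 1)) + g t) :=
        hc1.add hgc
      have hnn : ∀ t, 0 ≤ (h t) ^ ((1 : ℝ) / ((n : ℝ) + 1)) -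
          ((max (h t - ε) 0) ^ ((1 : ℝ) / ((n : ℝ) + 1)) + g t) := by
        intro t
        rcases le_total (h t) ε with hle | hle
        · have e1 : max (h t - ε) 0 = 0 := max_eq_right (by linarith)
          rw [e1, Real.zero_rpow hexp.ne']
          have e2 : g t ≤ h t := max_le (min_le_left _ _) (h0 t)
          have e3 : h t ≤ (h t) ^ ((1 : ℝ) / ((n : ℝ) + 1)) :=
            Real.self_le_rpow_of_le_one (h0 t) (hle.trans hε1) hexp1
          linarith
        · have e1 : g t = 0 := max_eq_right ((min_le_right _ _).trans (by linarith))
          have e2 : (max (h t - ε) 0) ^ ((1 : ℝ) / ((n : ℝ) + 1)) ≤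
              (h t) ^ ((1 : ℝ) / ((n : ℝ) + 1)) :=
            Real.rpow_le_rpow (le_max_right _ _) (max_le (by linarith) (h0 t)) hexp.le
          linarith
      have hpos := hτ.2.1 _ (cfc_pos_form ha _ (hc2.sub hc12) hnn)
      change 0 ≤ τ (cfc (fun t => (h t) ^ ((1 : ℝ) / ((n : ℝ) + 1)) -
          ((max (h t - ε) 0) ^ ((1 : ℝ) / ((n : ℝ) + 1)) + g t)) a) at hpos
      rw [cfc_sub _ _ a hc2.continuousOn hc12.continuousOn,
        cfc_add a _ _ hc1.continuousOn hgc.continuousOn, map_sub, map_add] at hpos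
      exact sub_nonneg.mp hpos
    have hlim := le_of_tendsto_of_tendsto' (hA.add_const (τ (cfc g a))) hB hineq
    have : (La : ℂ) < (Lb : ℂ) := lt_of_lt_of_le (lt_add_of_pos_right _ hgpos) hlim
    exact_mod_cast this

theorem cuntz_one_side {A : Type} [CStarAlgebra A]
    (hsc : StrictComparison A)
    (a b : A) (ha : IsSelfAdjoint a) (hb : IsSelfAdjoint b)
    (htr : ∀ (τ : A →L[ℂ] ℂ), IsTracialState τ →
      ∀ h : ℝ → ℝ, Continuous h → (∀ t, 0 ≤ h t) → h 0 = 0 →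
        (∃ t ∈ Set.Ioc (0 : ℝ) 1, h t ≠ 0) →
        τ (cfc h a) = τ (cfc h b) ∧ 0 < τ (cfc h a))
    (h : ℝ → ℝ) (hh : Continuous h) (h0 : ∀ t, 0 ≤ h t) (hz : h 0 = 0)
    (hne : ∃ t ∈ Set.Ioc (0 : ℝ) 1, h t ≠ 0) :
    CuntzBelow (cfc h a) (cfc h b) := by
  have step : ∀ n : ℕ, ∃ x : A,
      ‖cfc h a - x * cfc h b * star x‖ ≤ 1 / ((n : ℝ) + 1) + 1 / ((n : ℝ) + 1) := by
    intro n
    have hε : (0 : ℝ) < 1 / ((n : ℝ) + 1) := by positivity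
    have hε1 : (1 : ℝ) / ((n : ℝ) + 1) ≤ 1 := by
      rw [div_le_one (by positivity)]
      have : (0 : ℝ) ≤ n := Nat.cast_nonneg n
      linarith
    obtain ⟨x, hx⟩ := cuntz_cut hsc a b ha hb htr h hh h0 hz hne _ hε hε1
    obtain ⟨N, hN⟩ := (hx.eventually (gt_mem_nhds hε)).exists
    refine ⟨x N, ?_⟩
    have hfc : Continuous (fun t => max (h t - 1 / ((n : ℝ) + 1)) 0) := by fun_prop
    have hd : ‖cfc h a - cfc (fun t => max (h t - 1 / ((n : ℝ) + 1)) 0) a‖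
        ≤ 1 / ((n : ℝ) + 1) := by
      rw [← cfc_sub _ _ a hh.continuousOn hfc.continuousOn]
      refine norm_cfc_le hε.le fun t _ => ?_
      have := h0 t
      rw [Real.norm_eq_abs, abs_le]
      rcases max_cases (h t - 1 / ((n : ℝ) + 1)) 0 with ⟨e, _⟩ | ⟨e, _⟩ <;> rw [e] <;>
        constructor <;> linarith
    calc _ = ‖(cfc h a - cfc (fun t => max (h t - 1 / ((n : ℝ) + 1)) 0) a) +
          (cfc (fun t => max (h t - 1 / ((n : ℝ) + 1)) 0) a - x N * cfc h b * star (x N))‖ := by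
            rw [sub_add_sub_cancel]
      _ ≤ _ := (norm_add_le _ _).trans (add_le_add hd hN.le)
  choose x hx using step
  refine ⟨x, squeeze_zero (fun _ => norm_nonneg _) hx ?_⟩
  simpa using (tendsto_one_div_add_atTop_nhds_zero_nat (𝕜 := ℝ)).add
    (tendsto_one_div_add_atTop_nhds_zero_nat (𝕜 := ℝ))

/-- **Part of the proof of Lemma 2.1 of Tikuisis–White–Winter.** In a unital C*-algebra with
strict comparison of positive elements with respect to bounded traces, if two positive
contractions have the same (strictly positive) tracial data, then `h(a₁)` and `h(a₂)` are
Cuntz equivalent for every nonzero continuous `h : [0,1] → [0,∞)` with `h(0) = 0`. -/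
theorem cuntz_equivalent_of_traces_eq {A : Type} [CStarAlgebra A]
    (hsc : StrictComparison A)
    (a₁ a₂ : A) (hpos₁ : ∃ y, a₁ = star y * y) (hc₁ : ‖a₁‖ ≤ 1)
    (hpos₂ : ∃ y, a₂ = star y * y) (hc₂ : ‖a₂‖ ≤ 1)
    (htr : ∀ (τ : A →L[ℂ] ℂ), IsTracialState τ →
      ∀ h : ℝ → ℝ, Continuous h → (∀ t, 0 ≤ h t) → h 0 = 0 →
        (∃ t ∈ Set.Ioc (0 : ℝ) 1, h t ≠ 0) →
        τ (cfc h a₁) = τ (cfc h a₂) ∧ 0 < τ (cfc h a₁)) :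
    ∀ h : ℝ → ℝ, Continuous h → (∀ t, 0 ≤ h t) → h 0 = 0 →
      (∃ t ∈ Set.Ioc (0 : ℝ) 1, h t ≠ 0) →
      CuntzBelow (cfc h a₁) (cfc h a₂) ∧ CuntzBelow (cfc h a₂) (cfc h a₁) := by
  intro h hh h0 hz hne
  have ha := isSelfAdjoint_of_pos hpos₁
  have hb := isSelfAdjoint_of_pos hpos₂
  refine ⟨cuntz_one_side hsc a₁ a₂ ha hb htr h hh h0 hz hne,
    cuntz_one_side hsc a₂ a₁ hb ha ?_ h hh h0 hz hne⟩
  intro τ hτ k hk k0 kz kne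
  obtain ⟨e, p⟩ := htr τ hτ k hk k0 kz kne
  exact ⟨e.symm, e ▸ p⟩
end
end
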